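/- Assume the setup below. Then ∫₀¹ ψ*(t) dt = −(1/λ*) ∫₀¹ Λ(λ*(1−t)) dt = −(1/(λ*)²) ∫₀^{λ*} Λ(θ) dθ, and this quantity is strictly positive. -/

import Mathlib

open MeasureTheory Set Filter

open scoped Topology NNReal

/-!
If `Ξ θ` maximizes `x ↦ θ x - I x`, then `Ξ` selects a subgradient of the Legendre transform `Λ`,
so `Λ' = Ξ` off the countable set of jumps of the monotone function `Ξ`. Substituting
`θ = λ* (1 - s)` gives `λ* ψ* t = Λ λ* - Λ (λ* (1 - t))`. The line `x ↦ λ* x` lies below `I` and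
touches it at `x*`, hence `Λ λ* = 0`; lines of smaller positive slope stay strictly below `I`, hence
`Λ < 0` on `(0, λ*)`.
-/

/-- `g` selects a subgradient of `f` at each point of `s`; the supporting inequality is only
required between points of `s`. For `f = Λ` and `g = Ξ` this replaces the equation `Λ' = Ξ`, which
fails at the jumps of `Ξ`. -/
def IsSubgradientOn (f g : ℝ → ℝ) (s : Set ℝ) : Prop :=
  ∀ a ∈ s, ∀ b ∈ s, f a + g a * (b - a) ≤ f b

namespace IsSubgradientOn

variable {f g : ℝ → ℝ} {s t : Set ℝ} {a b : ℝ}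

theorem mono (h : IsSubgradientOn f g s) (hts : t ⊆ s) : IsSubgradientOn f g t :=
  fun a ha b hb ↦ h a (hts ha) b (hts hb)

theorem monotoneOn (h : IsSubgradientOn f g s) : MonotoneOn g s := by
  intro a ha b hb hab
  rcases hab.eq_or_lt with rfl | hlt
  · exact le_rfl
  · have hsum : g a * (b - a) ≤ g b * (b - a) := by linarith [h a ha b hb, h b hb a ha]
    exact le_of_mul_le_mul_right hsum (sub_pos.2 hlt)

theorem hasDerivAt (h : IsSubgradientOn f g s) (hs : s ∈ 𝓝 a) (hg : ContinuousAt g a) :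
    HasDerivAt f (g a) a := by
  have ha : a ∈ s := mem_of_mem_nhds hs
  rw [hasDerivAt_iff_isLittleO, Asymptotics.isLittleO_iff]
  intro ε hε
  filter_upwards [hs, Metric.continuousAt_iff'.1 hg ε hε] with b hb hgb
  have lower : f a + g a * (b - a) ≤ f b := h a ha b hb
  have upper : f b + g b * (a - b) ≤ f a := h b hb a ha
  rw [Real.dist_eq] at hgb
  rw [Real.norm_eq_abs, Real.norm_eq_abs, smul_eq_mul, abs_of_nonneg (by linarith)]
  calc f b - f a - (b - a) * g a ≤ (g b - g a) * (b - a) := by linarith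
    _ ≤ |g b - g a| * |b - a| := (le_abs_self _).trans_eq (abs_mul _ _)
    _ ≤ ε * |b - a| := by gcongr

theorem lipschitzOnWith {K : ℝ≥0} (h : IsSubgradientOn f g s) (hK : ∀ x ∈ s, |g x| ≤ K) :
    LipschitzOnWith K f s := by
  have one_sided : ∀ x ∈ s, ∀ y ∈ s, f x - f y ≤ K * |x - y| := fun x hx y hy ↦
    calc f x - f y ≤ g x * (x - y) := by linarith [h x hx y hy]
      _ ≤ |g x| * |x - y| := (le_abs_self _).trans_eq (abs_mul _ _)
      _ ≤ K * |x - y| := by gcongr; exact hK x hx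
  refine LipschitzOnWith.of_dist_le_mul fun x hx y hy ↦ ?_
  rw [Real.dist_eq, Real.dist_eq, abs_sub_le_iff]
  exact ⟨one_sided x hx y hy, abs_sub_comm x y ▸ one_sided y hy x hx⟩

theorem continuousOn_Icc (h : IsSubgradientOn f g (Icc a b)) : ContinuousOn f (Icc a b) := by
  refine (h.lipschitzOnWith (K := max ‖g a‖₊ ‖g b‖₊) fun x hx ↦ ?_).continuousOn
  have hab : a ≤ b := hx.1.trans hx.2
  exact abs_le_max_abs_abs (h.monotoneOn (left_mem_Icc.2 hab) hx hx.1)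
    (h.monotoneOn hx (right_mem_Icc.2 hab) hx.2)

theorem integral_eq_sub (h : IsSubgradientOn f g (Icc a b)) (hab : a ≤ b) :
    ∫ x in a..b, g x = f b - f a := by
  have hg : MonotoneOn g (Icc a b) := h.monotoneOn
  refine integral_eq_of_hasDerivAt_off_countable_of_le f g hab
    hg.countable_not_continuousWithinAt h.continuousOn_Icc (fun x hx ↦ ?_)
    (uIcc_of_le hab ▸ hg).intervalIntegrable
  have hnhds : Icc a b ∈ 𝓝 x := Icc_mem_nhds hx.1.1 hx.1.2
  have hcont : ContinuousWithinAt g (Icc a b) x :=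
    not_not.1 fun hx' ↦ hx.2 ⟨Ioo_subset_Icc_self hx.1, hx'⟩
  exact h.hasDerivAt hnhds (hcont.continuousAt hnhds)

end IsSubgradientOn

theorem integral_comp_mul_one_sub {E : Type*} [NormedAddCommGroup E] [NormedSpace ℝ E] {c : ℝ}
    (f : ℝ → E) (hc : c ≠ 0) (t : ℝ) :
    ∫ s in (0 : ℝ)..t, f (c * (1 - s)) = c⁻¹ • ∫ θ in (c * (1 - t))..c, f θ := by
  simpa only [mul_sub, mul_one, mul_zero, sub_zero] using
    intervalIntegral.integral_comp_sub_mul (a := 0) (b := t) f hc c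

theorem IsSubgradientOn.integral_comp_mul_one_sub_eq {f g : ℝ → ℝ} {c t : ℝ}
    (h : IsSubgradientOn f g (Icc 0 c)) (hc : 0 < c) (ht : t ∈ Icc (0 : ℝ) 1) :
    ∫ s in (0 : ℝ)..t, g (c * (1 - s)) = c⁻¹ * (f c - f (c * (1 - t))) := by
  have hlower : 0 ≤ c * (1 - t) := mul_nonneg hc.le (sub_nonneg.2 ht.2)
  have hupper : c * (1 - t) ≤ c := mul_le_of_le_one_right hc.le (sub_le_self 1 ht.1)
  rw [integral_comp_mul_one_sub g hc.ne', smul_eq_mul,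
    (h.mono (Icc_subset_Icc_left hlower)).integral_eq_sub hupper]

section Legendre

variable {I Ξ Λ : ℝ → ℝ} {s : Set ℝ} {θ l x₀ x₁ : ℝ}

theorem isMaxOn_mul_sub_of_convexOn_of_hasDerivAt (hI : ConvexOn ℝ s I) (hx₀ : x₀ ∈ interior s)
    (hderiv : HasDerivAt I θ x₀) : IsMaxOn (fun x ↦ θ * x - I x) s x₀ := by
  have hconvex : ConvexOn ℝ s fun x ↦ I x - θ * x :=
    hI.sub ((LinearMap.mul ℝ ℝ θ).concaveOn hI.1)
  have hstationary : HasDerivAt (fun x ↦ I x - θ * x) 0 x₀ := by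
    simpa using hderiv.fun_sub ((hasDerivAt_id x₀).const_mul θ)
  have hmin : IsMinOn (fun x ↦ I x - θ * x) s x₀ := hconvex.isMinOn_of_rightDeriv_eq_zero hx₀
    (hstationary.hasDerivWithinAt.derivWithin (uniqueDiffWithinAt_Ioi x₀))
  simpa only [neg_sub] using hmin.neg

theorem isSubgradientOn_of_isMaxOn_mul_sub
    (hΞ : ∀ θ ∈ s, IsMaxOn (fun x ↦ θ * x - I x) univ (Ξ θ))
    (hΛ : ∀ θ ∈ s, Λ θ = θ * Ξ θ - I (Ξ θ)) : IsSubgradientOn Λ Ξ s := by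
  intro a ha b hb
  calc Λ a + Ξ a * (b - a) = b * Ξ a - I (Ξ a) := by rw [hΛ a ha]; ring
    _ ≤ b * Ξ b - I (Ξ b) := isMaxOn_univ_iff.1 (hΞ b hb) (Ξ a)
    _ = Λ b := (hΛ b hb).symm

theorem mul_le_of_forall_le_div (hI : ∀ x, 0 ≤ I x) (hl : 0 ≤ l)
    (hmin : ∀ x, 0 < x → l ≤ I x / x) (x : ℝ) : l * x ≤ I x := by
  rcases le_or_gt x 0 with hx | hx
  · exact (mul_nonpos_of_nonneg_of_nonpos hl hx).trans (hI x)
  · exact (le_div_iff₀ hx).1 (hmin x hx)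

theorem mul_lt_of_forall_mul_le (hI : ∀ x, 0 ≤ I x) (hI0 : 0 < I 0) (hline : ∀ x, l * x ≤ I x)
    (hθ : θ ∈ Ioo 0 l) (x : ℝ) : θ * x < I x := by
  rcases lt_trichotomy x 0 with hx | rfl | hx
  · exact (mul_neg_of_pos_of_neg hθ.1 hx).trans_le (hI x)
  · simpa only [mul_zero] using hI0
  · exact (mul_lt_mul_of_pos_right hθ.2 hx).trans_le (hline x)

theorem mul_sub_eq_zero_of_isMaxOn (hmax : IsMaxOn (fun x ↦ l * x - I x) univ x₁)
    (hline : ∀ x, l * x ≤ I x) (htouch : l * x₀ = I x₀) : l * x₁ - I x₁ = 0 :=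
  le_antisymm (sub_nonpos.2 (hline x₁))
    ((sub_eq_zero.2 htouch).ge.trans (isMaxOn_univ_iff.1 hmax x₀))

end Legendre

theorem integral_neg_of_neg_on {f : ℝ → ℝ} {a b : ℝ} (hf : ContinuousOn f (Icc a b))
    (hneg : ∀ x ∈ Ioo a b, f x < 0) (hab : a < b) : ∫ x in a..b, f x < 0 := by
  have hint : IntervalIntegrable f volume a b := hf.intervalIntegrable_of_Icc hab.le
  have hpos := intervalIntegral.intervalIntegral_pos_of_pos_on hint.neg
    (fun x hx ↦ neg_pos.2 (hneg x hx)) hab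
  simpa only [Pi.neg_apply, intervalIntegral.integral_neg, neg_pos] using hpos

theorem psi_star_area_general {xstar lstar : ℝ} {I Ξ ψ Λ : ℝ → ℝ}
    (hI : ∀ x, 0 ≤ I x) (hI0 : 0 < I 0) (hxpos : 0 < xstar)
    (hxmin : ∀ x, 0 < x → I xstar / xstar ≤ I x / x)
    (hlam : lstar = I xstar / xstar) (hlampos : 0 < lstar)
    (hΞ : ∀ θ ∈ Icc 0 lstar, IsMaxOn (fun x ↦ θ * x - I x) univ (Ξ θ))
    (hψ : ∀ t ∈ Icc (0 : ℝ) 1, ψ t = ∫ s in (0 : ℝ)..t, Ξ (lstar * (1 - s)))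
    (hΛ : ∀ θ ∈ Icc 0 lstar, Λ θ = θ * Ξ θ - I (Ξ θ)) :
    (∫ t in (0 : ℝ)..1, ψ t) = -(1 / lstar) * ∫ t in (0 : ℝ)..1, Λ (lstar * (1 - t)) ∧
    (∫ t in (0 : ℝ)..1, ψ t) = -(1 / lstar ^ 2) * ∫ θ in (0 : ℝ)..lstar, Λ θ ∧
    0 < ∫ t in (0 : ℝ)..1, ψ t := by
  have hline : ∀ x, lstar * x ≤ I x := mul_le_of_forall_le_div hI hlampos.le (hlam ▸ hxmin)
  have hsub : IsSubgradientOn Λ Ξ (Icc 0 lstar) := isSubgradientOn_of_isMaxOn_mul_sub hΞ hΛ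
  have hlast : lstar ∈ Icc 0 lstar := right_mem_Icc.2 hlampos.le
  have hΛlast : Λ lstar = 0 := (hΛ _ hlast).trans <|
    mul_sub_eq_zero_of_isMaxOn (hΞ _ hlast) hline ((eq_div_iff hxpos.ne').1 hlam)
  have hΛneg : ∀ θ ∈ Ioo 0 lstar, Λ θ < 0 := fun θ hθ ↦ by
    rw [hΛ θ (Ioo_subset_Icc_self hθ), sub_neg]
    exact mul_lt_of_forall_mul_le hI hI0 hline hθ (Ξ θ)
  have hψΛ : ∀ t ∈ Icc (0 : ℝ) 1, ψ t = -(1 / lstar) * Λ (lstar * (1 - t)) := fun t ht ↦ by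
    rw [hψ t ht, hsub.integral_comp_mul_one_sub_eq hlampos ht, hΛlast]
    ring
  have hfirst : ∫ t in (0 : ℝ)..1, ψ t = -(1 / lstar) * ∫ t in (0 : ℝ)..1, Λ (lstar * (1 - t)) := by
    rw [← intervalIntegral.integral_const_mul]
    exact intervalIntegral.integral_congr (uIcc_of_le (zero_le_one' ℝ) ▸ hψΛ)
  have hsecond : ∫ t in (0 : ℝ)..1, ψ t = -(1 / lstar ^ 2) * ∫ θ in (0 : ℝ)..lstar, Λ θ := by
    rw [hfirst, integral_comp_mul_one_sub Λ hlampos.ne', sub_self, mul_zero, smul_eq_mul]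
    ring
  refine ⟨hfirst, hsecond, hsecond ▸ mul_pos_of_neg_of_neg ?_ ?_⟩
  · exact neg_neg_of_pos (by positivity)
  · exact integral_neg_of_neg_on hsub.continuousOn_Icc hΛneg hlampos

/-- The area swept by `ψ*`:
`∫₀¹ ψ*(t) dt = −(1/λ*) ∫₀¹ Λ(λ*(1−t)) dt = −(1/λ*²) ∫₀^{λ*} Λ(θ) dθ > 0`. -/
theorem psi_star_area
    (δ xstar lstar : ℝ) (I Ξ : ℝ → ℝ)
    (hδ : 0 < δ)
    (hconv : StrictConvexOn ℝ Set.univ I)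
    (hC1 : ContDiff ℝ 1 I)
    (hImin : I (-δ) = 0)
    (hIpos : ∀ x : ℝ, x ≠ -δ → 0 < I x)
    (hderivδ : deriv I (-δ) = 0)
    (hxpos : 0 < xstar)
    (hxmin : ∀ x : ℝ, 0 < x → I xstar / xstar ≤ I x / x)
    (hlamdef : lstar = deriv I xstar)
    (hlamalt : lstar = I xstar / xstar)
    (hlampos : 0 < lstar)
    (hΞinvL : ∀ x ∈ Set.Icc (-δ) xstar, Ξ (deriv I x) = x)
    (hΞinvR : ∀ r ∈ Set.Icc (0:ℝ) lstar, deriv I (Ξ r) = r)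
    (hΞmaps : ∀ r ∈ Set.Icc (0:ℝ) lstar, Ξ r ∈ Set.Icc (-δ) xstar)
    (hΞcont : ContinuousOn Ξ (Set.Icc 0 lstar))
    (hΞmono : StrictMonoOn Ξ (Set.Icc 0 lstar))
    (hΞzero : Ξ 0 = -δ)
    (hΞlstar : Ξ lstar = xstar)
    (ψ : ℝ → ℝ)
    (hψ : ∀ t : ℝ, ψ t = ∫ s in (0:ℝ)..t, Ξ (lstar * (1 - s)))
    (Λ : ℝ → ℝ)
    (hΛ : ∀ θ ∈ Set.Icc (0:ℝ) lstar, Λ θ = θ * Ξ θ - I (Ξ θ)) :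
    (∫ t in (0:ℝ)..1, ψ t) = -(1 / lstar) * ∫ t in (0:ℝ)..1, Λ (lstar * (1 - t)) ∧
    (∫ t in (0:ℝ)..1, ψ t) = -(1 / lstar ^ 2) * ∫ θ in (0:ℝ)..lstar, Λ θ ∧
    0 < ∫ t in (0:ℝ)..1, ψ t := by
  have hI : ∀ x, 0 ≤ I x := fun x ↦
    (eq_or_ne x (-δ)).elim (fun hx ↦ (hx ▸ hImin).ge) fun hx ↦ (hIpos x hx).le
  have hΞmax : ∀ θ ∈ Icc 0 lstar, IsMaxOn (fun x ↦ θ * x - I x) univ (Ξ θ) := fun θ hθ ↦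
    isMaxOn_mul_sub_of_convexOn_of_hasDerivAt hconv.convexOn (by simp)
      (by simpa only [hΞinvR θ hθ] using (hC1.differentiable one_ne_zero (Ξ θ)).hasDerivAt)
  exact psi_star_area_general hI (hIpos 0 (neg_neg_of_pos hδ).ne') hxpos hxmin hlamalt hlampos hΞmax
    (fun t _ ↦ hψ t) hΛ
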